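/- arXiv:2401.04756 — 2 statements merged into one kernel-verified Lean document; each statement's English description precedes it below -/
import Mathlib

section
/- For every real γ > 0 there exist a real δ > 0 and a constant c > 0, both depending only on γ, such that for every prime p and every nonempty subset A ⊆ 𝔽_p with |A| ≤ p^{1−γ}, one has max(|A+A|, |A·A|) ≥ c·|A|^{1+δ}. -/
open scoped Pointwise
open Finset

/-- Averaging: some nonzero dilate has a large sumset. -/
lemma exists_large_dilate {p : ℕ} [Fact p.Prime] (B : Finset (ZMod p)) :
    ∃ ξ : ZMod p, min (#B ^ 2) p ≤ 4 * #(B + ξ • B) := by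
  have hp2 : 2 ≤ p := (Fact.out : p.Prime).two_le
  let Q := (B ×ˢ B) ×ˢ (B ×ˢ B)
  let N : ZMod p → ℕ := fun ξ => #{q ∈ Q | q.1.1 + ξ * q.2.1 = q.1.2 + ξ * q.2.2}
  have hCS : ∀ ξ : ZMod p, ξ ≠ 0 → #B ^ 2 * #B ^ 2 ≤ #(B + ξ • B) * N ξ := by
    intro ξ hξ
    have h := le_card_add_mul_addEnergy B (ξ • B)
    rw [card_smul_finset₀ hξ] at h
    refine h.trans (Nat.mul_le_mul_left _ ?_)
    unfold addEnergy
    refine (card_le_card (t := ({q ∈ Q | q.1.1 + ξ * q.2.1 = q.1.2 + ξ * q.2.2}).image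
      (fun q => (q.1, (ξ * q.2.1, ξ * q.2.2)))) ?_).trans card_image_le
    rintro ⟨⟨x, x'⟩, ⟨y, y'⟩⟩ hq
    simp only [mem_filter, mem_product, mem_smul_finset, smul_eq_mul] at hq
    obtain ⟨⟨⟨hx, hx'⟩, ⟨z, hz, rfl⟩, ⟨z', hz', rfl⟩⟩, he⟩ := hq
    simp only [mem_image, mem_filter]
    exact ⟨((x, x'), (z, z')), ⟨by simp [Q, *], he⟩, rfl⟩
  have hsum : ∑ ξ ∈ univ.erase (0 : ZMod p), N ξ ≤ (p - 1) * #B ^ 2 + #B ^ 2 * #B ^ 2 := by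
    have hcard : #(univ.erase (0 : ZMod p)) = p - 1 := by
      rw [card_erase_of_mem (mem_univ _), card_univ, ZMod.card]
    calc ∑ ξ ∈ univ.erase (0 : ZMod p), N ξ
        = ∑ q ∈ Q, #{ξ ∈ univ.erase (0 : ZMod p) | q.1.1 + ξ * q.2.1 = q.1.2 + ξ * q.2.2} := by
          simp only [N, card_filter]
          exact sum_comm
      _ ≤ ∑ q ∈ Q, ((if q.1.1 = q.1.2 ∧ q.2.1 = q.2.2 then (p - 1) else 0) + 1) := by
          refine sum_le_sum fun q _ => ?_
          split_ifs with h
          · exact (card_filter_le _ _).trans (by omega)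
          · rw [zero_add, card_le_one]
            intro s hs t ht
            simp only [mem_filter, mem_erase, mem_univ, and_true] at hs ht
            have hy : q.2.1 ≠ q.2.2 := by
              intro hy
              apply h
              refine ⟨?_, hy⟩
              have := hs.2
              rw [hy] at this
              exact add_right_cancel this
            have : (s - t) * (q.2.1 - q.2.2) = 0 := by
              linear_combination hs.2 - ht.2
            rcases mul_eq_zero.1 this with h1 | h1
            · exact sub_eq_zero.1 h1
            · exact absurd (sub_eq_zero.1 h1) hy
      _ ≤ (p - 1) * #B ^ 2 + #B ^ 2 * #B ^ 2 := by
          rw [sum_add_distrib, ← sum_filter, sum_const, sum_const]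
          have h1 : #{q ∈ Q | q.1.1 = q.1.2 ∧ q.2.1 = q.2.2} ≤ #B ^ 2 := by
            rw [sq, ← card_product]
            refine (card_le_card (t := (B ×ˢ B).image (fun q => ((q.1, q.1), (q.2, q.2)))) ?_).trans
              card_image_le
            rintro ⟨⟨x, x'⟩, ⟨y, y'⟩⟩ hq
            simp only [mem_filter, Q, mem_product] at hq
            obtain ⟨⟨⟨hx, hx'⟩, hy, hy'⟩, rfl, rfl⟩ := hq
            simp only [mem_image, mem_product]
            exact ⟨(x, y), ⟨hx, hy⟩, rfl⟩
          have h2 : #Q = #B ^ 2 * #B ^ 2 := by simp only [Q, card_product]; ring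
          rw [h2, smul_eq_mul, smul_eq_mul]
          nlinarith [Nat.mul_le_mul_right (p - 1) h1]
  rcases B.eq_empty_or_nonempty with rfl | hB
  · exact ⟨0, by simp⟩
  by_contra! hcon
  set m := #B ^ 2 with hm
  have hmpos : 0 < m := by have := hB.card_pos; positivity
  -- for each ξ ≠ 0, N ξ * min m p > 4 m^2
  have hcard : #(univ.erase (0 : ZMod p)) = p - 1 := by
    rw [card_erase_of_mem (mem_univ _), card_univ, ZMod.card]
  have hX : ∀ ξ ∈ univ.erase (0 : ZMod p), 4 * (m * m) ≤ min m p * N ξ := by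
    intro ξ hξ
    have h1 := hCS ξ (by simpa using hξ)
    have h2 := hcon ξ
    calc 4 * (m * m) ≤ 4 * (#(B + ξ • B) * N ξ) := by omega
      _ = (4 * #(B + ξ • B)) * N ξ := by ring
      _ ≤ _ := Nat.mul_le_mul_right _ h2.le
  have h3 := sum_le_sum hX
  rw [sum_const, hcard, ← mul_sum, smul_eq_mul] at h3
  have h4 := h3.trans (Nat.mul_le_mul_left _ hsum)
  have h5 : (min m p) * ((p - 1) * m + m * m) < (p - 1) * (4 * (m * m)) := by
    obtain ⟨k, rfl⟩ : ∃ k, p = k + 2 := ⟨p - 2, by omega⟩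
    have e : k + 2 - 1 = k + 1 := by omega
    rw [e]
    have a1 : min m (k + 2) ≤ m := min_le_left _ _
    have a2 : min m (k + 2) ≤ 2 * (k + 1) := (min_le_right _ _).trans (by omega)
    have b1 := Nat.mul_le_mul_right ((k + 1) * m) a1
    have b2 := Nat.mul_le_mul_right (m * m) a2
    have : 0 < (k + 1) * (m * m) := by positivity
    nlinarith
  omega

/-- The pivot lemma. -/
lemma pivot {p : ℕ} [Fact p.Prime] (B : Finset (ZMod p)) (hB : 2 ≤ #B) :
    ∃ a ∈ B, ∃ b ∈ B, ∃ c ∈ B, ∃ d ∈ B,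
      min (#B ^ 2) p ≤ 4 * #((c - d) • B + (c - d) • B + (a - b) • B) := by
  have hp2 : 2 ≤ p := (Fact.out : p.Prime).two_le
  have hBne : B.Nonempty := card_pos.1 (by omega)
  let R : ZMod p → Prop := fun r => ∃ a ∈ B, ∃ b ∈ B, ∃ c ∈ B, ∃ d ∈ B, c ≠ d ∧ r * (c - d) = a - b
  by_cases hR : ∀ r, R r
  · obtain ⟨ξ, hξ⟩ := exists_large_dilate B
    obtain ⟨a, ha, b, hb, c, hc, d, hd, hcd, h⟩ := hR ξ
    refine ⟨a, ha, b, hb, c, hc, d, hd, hξ.trans (Nat.mul_le_mul_left _ ?_)⟩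
    have hcd' : c - d ≠ 0 := sub_ne_zero.2 hcd
    have e : (c - d) • (B + ξ • B) = (c - d) • B + (a - b) • B := by
      rw [smul_add, smul_smul, ← h, mul_comm]
    rw [← card_smul_finset₀ hcd', e, add_assoc]
    exact card_le_card_add_left (hBne.smul_finset)
  · push Not at hR
    have h0 : R 0 := by
      obtain ⟨c, hc, d, hd, hcd⟩ := one_lt_card.1 (show 1 < #B by omega)
      exact ⟨c, hc, c, hc, c, hc, d, hd, hcd, by simp⟩
    have : ∃ r, R r ∧ ¬ R (r + 1) := by
      by_contra! hcon
      obtain ⟨r, hr⟩ := hR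
      apply hr
      have : ∀ n : ℕ, R n := by
        intro n
        induction n with
        | zero => simpa using h0
        | succ n ih => simpa using hcon _ ih
      simpa using this r.val
    obtain ⟨r, ⟨a, ha, b, hb, c, hc, d, hd, hcd, h⟩, hr1⟩ := this
    refine ⟨a, ha, b, hb, c, hc, d, hd, ?_⟩
    have hcd' : c - d ≠ 0 := sub_ne_zero.2 hcd
    have key : #B ^ 2 ≤ #((c - d) • B + (c - d) • B + (a - b) • B) := by
      rw [sq, ← card_product]
      refine card_le_card_of_injOn (fun q => (c - d) * q.1 + (c - d) * q.2 + (a - b) * q.2) ?_ ?_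
      · rintro ⟨x, y⟩ hq
        simp only [coe_product, Set.mem_prod, mem_coe] at hq
        exact add_mem_add (add_mem_add (smul_mem_smul_finset hq.1) (smul_mem_smul_finset hq.2))
          (smul_mem_smul_finset hq.2)
      · rintro ⟨x, y⟩ hq ⟨x', y'⟩ hq' heq
        simp only [coe_product, Set.mem_prod, mem_coe] at hq hq' heq
        have e : (c - d) * ((r + 1) * (y - y') - (x' - x)) = 0 := by
          linear_combination heq + (y - y') * h
        have e2 := (mul_eq_zero.1 e).resolve_left hcd'
        have hy : y = y' := by
          by_contra hy
          exact hr1 ⟨x', hq'.1, x, hq.1, y, hq.2, y', hq'.2, hy, sub_eq_zero.1 e2⟩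
        subst hy
        simp only [sub_self, mul_zero, zero_sub, neg_sub, sub_eq_zero] at e2
        rw [e2]
    have := min_le_left (#B ^ 2) p
    omega

/-- Energy pigeonhole: popular dilates. -/
lemma popular {p : ℕ} [Fact p.Prime] (A : Finset (ZMod p)) (hA : A.Nonempty) (h0 : (0 : ZMod p) ∉ A)
    (K : ℝ) (hK : (#(A * A) : ℝ) ≤ K * #A) :
    ∃ t ∈ A, ∃ B ⊆ A, (#A : ℝ) ≤ 2 * K * #B ∧
      ∀ a ∈ B, (#A : ℝ) ≤ 2 * K * #(a • A ∩ t • A) := by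
  have hn : (0 : ℝ) < #A := by exact_mod_cast hA.card_pos
  have hKpos : 0 < K := by
    have : 0 < #(A * A) := (hA.mul hA).card_pos
    have : (0 : ℝ) < #(A * A) := by exact_mod_cast this
    by_contra! h
    nlinarith
  have hE : mulEnergy A A ≤ ∑ t ∈ A, ∑ a ∈ A, #(a • A ∩ t • A) := by
    unfold mulEnergy
    rw [← sum_product' A A (fun t a => #(a • A ∩ t • A)), ← card_sigma]
    refine card_le_card_of_injOn (fun q => ⟨(q.1.2, q.1.1), q.1.1 * q.2.1⟩) ?_ ?_
    · rintro ⟨⟨x, x'⟩, ⟨y, y'⟩⟩ hq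
      simp only [coe_filter, mem_product, Set.mem_ofPred_eq] at hq
      obtain ⟨⟨⟨hx, hx'⟩, hy, hy'⟩, he⟩ := hq
      simp only [coe_sigma, Set.mem_sigma_iff, mem_coe, mem_product, mem_inter]
      refine ⟨⟨hx', hx⟩, smul_mem_smul_finset hy, ?_⟩
      rw [he]
      exact smul_mem_smul_finset hy'
    · rintro ⟨⟨x, x'⟩, ⟨y, y'⟩⟩ hq ⟨⟨z, z'⟩, ⟨w, w'⟩⟩ hq' heq
      simp only [coe_filter, mem_product, Set.mem_ofPred_eq] at hq hq'
      simp only [Sigma.mk.injEq, Prod.mk.injEq, heq_eq_eq] at heq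
      obtain ⟨⟨rfl, rfl⟩, h⟩ := heq
      have hx : x ≠ 0 := fun h => h0 (h ▸ hq.1.1.1)
      have hx' : x' ≠ 0 := fun h => h0 (h ▸ hq.1.1.2)
      have e1 : y = w := mul_left_cancel₀ hx h
      subst e1
      have e2 : y' = w' := mul_left_cancel₀ hx' (hq.2.symm.trans hq'.2)
      rw [e2]
  have hCS := le_card_mul_mul_mulEnergy A A
  have hE' : (#A : ℝ) ^ 3 ≤ K * ∑ t ∈ A, ∑ a ∈ A, (#(a • A ∩ t • A) : ℝ) := by
    have h1 : ((#A : ℝ) ^ 2 * (#A : ℝ) ^ 2) ≤ #(A * A) * (mulEnergy A A : ℝ) := by exact_mod_cast hCS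
    have h2 : (mulEnergy A A : ℝ) ≤ ∑ t ∈ A, ∑ a ∈ A, (#(a • A ∩ t • A) : ℝ) := by exact_mod_cast hE
    have h3 : (#(A * A) : ℝ) * (mulEnergy A A : ℝ) ≤
        (K * #A) * ∑ t ∈ A, ∑ a ∈ A, (#(a • A ∩ t • A) : ℝ) := by gcongr
    refine le_of_mul_le_mul_left ?_ hn
    linarith
  obtain ⟨t, ht, hts⟩ : ∃ t ∈ A, (#A : ℝ) ^ 2 ≤ K * ∑ a ∈ A, (#(a • A ∩ t • A) : ℝ) := by
    by_contra! hcon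
    have := sum_lt_sum_of_nonempty hA hcon
    rw [← mul_sum, sum_const, nsmul_eq_mul] at this
    nlinarith
  refine ⟨t, ht, {a ∈ A | (#A : ℝ) ≤ 2 * K * #(a • A ∩ t • A)}, filter_subset _ _, ?_, ?_⟩
  · set B := {a ∈ A | (#A : ℝ) ≤ 2 * K * #(a • A ∩ t • A)} with hB
    have hterm : ∀ a ∈ A, 2 * K * (#(a • A ∩ t • A) : ℝ) ≤
        #A + (if (#A : ℝ) ≤ 2 * K * #(a • A ∩ t • A) then 2 * K * (#A : ℝ) else 0) := by
      intro a ha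
      split_ifs with h
      · have : #(a • A ∩ t • A) ≤ #A := (card_le_card inter_subset_left).trans card_image_le
        have : (#(a • A ∩ t • A) : ℝ) ≤ #A := by exact_mod_cast this
        have := mul_le_mul_of_nonneg_left this (show 0 ≤ 2 * K by positivity)
        linarith
      · push Not at h
        linarith
    have := sum_le_sum hterm
    rw [← mul_sum, sum_add_distrib, ← sum_filter, ← hB, sum_const, sum_const, nsmul_eq_mul,
      nsmul_eq_mul] at this
    refine le_of_mul_le_mul_left ?_ hn
    nlinarith
  · intro a ha
    exact (mem_filter.1 ha).2

/-- A popular dilate is covered by few translates of `t • A - t • A`. -/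
lemma cover {p : ℕ} [Fact p.Prime] (A : Finset (ZMod p)) (hA : A.Nonempty)
    (K : ℝ) (hK0 : 0 < K) (hK : (#(A + A) : ℝ) ≤ K * #A) (a t : ZMod p) (ht : t ≠ 0)
    (h : (#A : ℝ) ≤ 2 * K * #(a • A ∩ t • A)) :
    ∃ X : Finset (ZMod p), (#X : ℝ) ≤ 2 * K ^ 3 ∧ a • A ⊆ X + (t • A - t • A) := by
  have hn : (0 : ℝ) < #A := by exact_mod_cast hA.card_pos
  have hd : ∀ s : ZMod p, #(s • A + s • A) ≤ #(A + A) := by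
    intro s
    rw [← smul_add]
    exact card_image_le
  set I := a • A ∩ t • A with hI
  have hR := ruzsa_triangle_inequality_add_add_add (a • A) I (t • A)
  have h1 : #(a • A + I) ≤ #(A + A) :=
    (card_le_card (add_subset_add_left inter_subset_left)).trans (hd a)
  have h2 : #(I + t • A) ≤ #(A + A) :=
    (card_le_card (add_subset_add_right inter_subset_right)).trans (hd t)
  have h3 : (#(a • A + t • A) : ℝ) * #I ≤ #(A + A) * #(A + A) := by
    exact_mod_cast hR.trans (Nat.mul_le_mul h1 h2)
  have h4 : (#(A + A) : ℝ) * #(A + A) ≤ (K * #A) * (K * #A) := by gcongr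
  have h5 : (#(a • A + t • A) : ℝ) ≤ 2 * K ^ 3 * #(t • A) := by
    rw [card_smul_finset₀ ht]
    refine le_of_mul_le_mul_right ?_ hn
    calc (#(a • A + t • A) : ℝ) * #A ≤ #(a • A + t • A) * (2 * K * #I) := by gcongr
      _ = 2 * K * (#(a • A + t • A) * #I) := by ring
      _ ≤ 2 * K * ((K * #A) * (K * #A)) := mul_le_mul_of_nonneg_left (h3.trans h4) (by positivity)
      _ = _ := by ring
  obtain ⟨F, -, hF, hF'⟩ := ruzsa_covering_add hA.smul_finset h5
  exact ⟨F, hF, hF'⟩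

lemma rearrange {M : Type*} [AddCommMonoid M] (c d a b T S : M) :
    c + d + (c + d) + (a + b) + (6 • T + 6 • S) =
      c + (T + S) + (d + (S + T)) + (c + (T + S) + (d + (S + T))) +
        (a + (T + S) + (b + (S + T))) := by
  abel

set_option maxHeartbeats 1000000 in
lemma main_ineq {p : ℕ} [Fact p.Prime] (A : Finset (ZMod p)) (hA : A.Nonempty)
    (h0 : (0 : ZMod p) ∉ A) (K : ℝ) (hKs : (#(A + A) : ℝ) ≤ K * #A)
    (hKm : (#(A * A) : ℝ) ≤ K * #A) :
    min ((#A : ℝ) ^ 2) p ≤ 1024 * K ^ 32 * #A := by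
  have hn : (1 : ℝ) ≤ #A := by exact_mod_cast hA.card_pos
  have hK1 : 1 ≤ K := by
    have : #A ≤ #(A + A) := card_le_card_add_left hA
    have : (#A : ℝ) ≤ #(A + A) := by exact_mod_cast this
    by_contra! h
    nlinarith
  have hK0 : 0 < K := by linarith
  obtain ⟨t, ht, B, hBA, hBc, hB⟩ := popular A hA h0 K hKm
  have ht0 : t ≠ 0 := fun h => h0 (h ▸ ht)
  have hp1 : (1 : ℝ) ≤ p := by exact_mod_cast (Fact.out : p.Prime).one_le
  -- the key bound
  have key : min ((#B : ℝ) ^ 2) p ≤ 256 * K ^ 30 * #A := by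
    rcases lt_or_ge #B 2 with hB2 | hB2
    · have : (#B : ℝ) ≤ 1 := by exact_mod_cast (by omega : #B ≤ 1)
      have h1 : (1 : ℝ) ≤ K ^ 30 := one_le_pow₀ hK1
      calc min ((#B : ℝ) ^ 2) p ≤ (#B : ℝ) ^ 2 := min_le_left _ _
        _ ≤ 1 := by have : (0 : ℝ) ≤ #B := by positivity
                    nlinarith
        _ ≤ 256 * K ^ 30 * #A := by nlinarith
    · obtain ⟨a, ha, b, hb, c, hc, d, hd, hpiv⟩ := pivot B hB2
      have hcov := fun x hx => cover A hA K hK0 hKs x t ht0 (hB x hx)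
      obtain ⟨Xa, hXa, hXa'⟩ := hcov a ha
      obtain ⟨Xb, hXb, hXb'⟩ := hcov b hb
      obtain ⟨Xc, hXc, hXc'⟩ := hcov c hc
      obtain ⟨Xd, hXd, hXd'⟩ := hcov d hd
      set T := t • A with hT
      have hsub : ∀ (x y : ZMod p), (x - y) • B ⊆ x • A - y • A := by
        intro x y z hz
        obtain ⟨w, hw, rfl⟩ := mem_smul_finset.1 hz
        rw [sub_smul]
        exact sub_mem_sub (smul_mem_smul_finset (hBA hw)) (smul_mem_smul_finset (hBA hw))
      have hS : (c - d) • B + (c - d) • B + (a - b) • B ⊆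
          (Xc - Xd + (Xc - Xd) + (Xa - Xb)) + (6 • T - 6 • T) := by
        have e : (Xc - Xd + (Xc - Xd) + (Xa - Xb)) + (6 • T - 6 • T) =
            ((Xc + (T - T)) - (Xd + (T - T))) + ((Xc + (T - T)) - (Xd + (T - T))) +
            ((Xa + (T - T)) - (Xb + (T - T))) := by
          simp only [sub_eq_add_neg, neg_add, neg_neg, ← neg_nsmul]
          exact rearrange _ _ _ _ _ _
        rw [e]
        have hcd := (hsub c d).trans (sub_subset_sub hXc' hXd')
        have hab := (hsub a b).trans (sub_subset_sub hXa' hXb')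
        exact add_subset_add (add_subset_add hcd hcd) hab
      have hP : (#(6 • T - 6 • T) : ℝ) ≤ K ^ 12 * #A := by
        have h := pluennecke_ruzsa_inequality_nsmul_sub_nsmul_add (A := T) hA.smul_finset T 6 6
        have h' : (#(6 • T - 6 • T) : ℝ) ≤ (#(T + T) / #T : ℝ) ^ (6 + 6) * #T := by
          have h2 := (NNRat.cast_le (K := ℝ)).2 h
          push_cast at h2
          exact h2
        have hTc : #T = #A := card_smul_finset₀ ht0 _
        have hTT : #(T + T) = #(A + A) := by
          rw [hT, ← smul_add, card_smul_finset₀ ht0]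
        rw [hTc, hTT] at h'
        refine h'.trans ?_
        have : (#(A + A) : ℝ) / #A ≤ K := by
          rw [div_le_iff₀ (by linarith)]; exact hKs
        norm_num
        gcongr
      have hXX : ∀ X Y : Finset (ZMod p), (#X : ℝ) ≤ 2 * K ^ 3 → (#Y : ℝ) ≤ 2 * K ^ 3 →
          (#(X - Y) : ℝ) ≤ 4 * K ^ 6 := by
        intro X Y hX hY
        have : (#(X - Y) : ℝ) ≤ #X * #Y := by exact_mod_cast card_sub_le
        calc (#(X - Y) : ℝ) ≤ #X * #Y := this
          _ ≤ (2 * K ^ 3) * (2 * K ^ 3) := by gcongr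
          _ = _ := by ring
      have hcast : ∀ X Y : Finset (ZMod p), (#(X + Y) : ℝ) ≤ #X * #Y := by
        intro X Y; exact_mod_cast card_add_le
      have hX3 : (#(Xc - Xd + (Xc - Xd) + (Xa - Xb)) : ℝ) ≤ 64 * K ^ 18 := by
        calc (#(Xc - Xd + (Xc - Xd) + (Xa - Xb)) : ℝ)
            ≤ #(Xc - Xd + (Xc - Xd)) * #(Xa - Xb) := hcast _ _
          _ ≤ (#(Xc - Xd) * #(Xc - Xd)) * #(Xa - Xb) := by gcongr; exact hcast _ _
          _ ≤ ((4 * K ^ 6) * (4 * K ^ 6)) * (4 * K ^ 6) := by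
              gcongr
              · exact hXX _ _ hXc hXd
              · exact hXX _ _ hXc hXd
              · exact hXX _ _ hXa hXb
          _ = _ := by ring
      have hSc : (#((c - d) • B + (c - d) • B + (a - b) • B) : ℝ) ≤ 64 * K ^ 30 * #A := by
        calc (#((c - d) • B + (c - d) • B + (a - b) • B) : ℝ)
            ≤ #((Xc - Xd + (Xc - Xd) + (Xa - Xb)) + (6 • T - 6 • T)) := by
              exact_mod_cast card_le_card hS
          _ ≤ #(Xc - Xd + (Xc - Xd) + (Xa - Xb)) * #(6 • T - 6 • T) := hcast _ _
          _ ≤ (64 * K ^ 18) * (K ^ 12 * #A) := by gcongr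
          _ = _ := by ring
      generalize #((c - d) • B + (c - d) • B + (a - b) • B) = s at hpiv hSc
      have hpiv' : min ((#B : ℝ) ^ 2) p ≤ 4 * s := by exact_mod_cast hpiv
      linarith
  have hmin : min ((#A : ℝ) ^ 2) p ≤ 4 * K ^ 2 * min ((#B : ℝ) ^ 2) p := by
    rw [mul_min_of_nonneg _ _ (by positivity)]
    refine min_le_min ?_ ?_
    · calc (#A : ℝ) ^ 2 ≤ (2 * K * #B) ^ 2 := by gcongr
        _ = _ := by ring
    · have : (1 : ℝ) ≤ K ^ 2 := one_le_pow₀ hK1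
      nlinarith
  calc min ((#A : ℝ) ^ 2) p ≤ 4 * K ^ 2 * min ((#B : ℝ) ^ 2) p := hmin
    _ ≤ 4 * K ^ 2 * (256 * K ^ 30 * #A) := by gcongr
    _ = _ := by ring

/-- Sum-product theorem of Bourgain–Katz–Tao: for every `γ > 0` there exist `δ > 0` and
`c > 0` such that for every prime `p` and every nonempty `A ⊆ 𝔽_p` with `|A| ≤ p^{1-γ}`,
one has `max(|A+A|, |A·A|) ≥ c·|A|^{1+δ}`. -/
theorem sum_product_bourgain_katz_tao :
    ∀ γ : ℝ, 0 < γ →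
      ∃ δ : ℝ, 0 < δ ∧ ∃ c : ℝ, 0 < c ∧
        ∀ (p : ℕ) [Fact p.Prime],
          ∀ A : Finset (ZMod p), A.Nonempty → (A.card : ℝ) ≤ (p : ℝ) ^ ((1 : ℝ) - γ) →
            c * (A.card : ℝ) ^ ((1 : ℝ) + δ) ≤ (max (A + A).card (A * A).card : ℝ) := by
  intro γ hγ
  set g : ℝ := min γ 1 with hg
  have hg0 : 0 < g := lt_min hγ one_pos
  refine ⟨g / 32, by positivity, 1 / 8, by norm_num, ?_⟩
  intro p _ A hA hcard
  set M : ℝ := max ((A + A).card : ℝ) ((A * A).card : ℝ) with hM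
  have hM1 : (#(A + A) : ℝ) ≤ M := le_max_left _ _
  have hM2 : (#(A * A) : ℝ) ≤ M := le_max_right _ _
  have hnM : (#A : ℝ) ≤ M := by
    refine le_trans ?_ hM1
    exact_mod_cast card_le_card_add_left hA
  have hn : (1 : ℝ) ≤ #A := by exact_mod_cast hA.card_pos
  have hp1 : (1 : ℝ) ≤ p := by exact_mod_cast (Fact.out : p.Prime).one_le
  rcases lt_or_ge #A 2 with h2 | h2
  · have : #A = 1 := by have := hA.card_pos; omega
    rw [this] at hnM ⊢
    simp only [Nat.cast_one, Real.one_rpow] at hnM ⊢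
    linarith
  set A' := A.erase 0 with hA'
  have hc' : #A ≤ 2 * #A' := by
    have : #A - 1 ≤ #A' := pred_card_le_card_erase
    omega
  have hA'ne : A'.Nonempty := card_pos.1 (by omega)
  have hn' : (1 : ℝ) ≤ #A' := by exact_mod_cast hA'ne.card_pos
  have hcR : (#A : ℝ) ≤ 2 * #A' := by exact_mod_cast hc'
  have hcle : (#A' : ℝ) ≤ #A := by exact_mod_cast card_erase_le
  have hsubA : A' ⊆ A := erase_subset _ _
  have hKe : M / #A' * #A' = M := div_mul_cancel₀ _ (by linarith)
  have hmain := main_ineq A' hA'ne (by simp [hA']) (M / #A')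
    (by rw [hKe]; refine le_trans ?_ hM1; exact_mod_cast card_le_card (add_subset_add hsubA hsubA))
    (by rw [hKe]; refine le_trans ?_ hM2; exact_mod_cast card_le_card (mul_subset_mul hsubA hsubA))
  have hlow : (#A : ℝ) ^ (1 + g) / 4 ≤ min ((#A' : ℝ) ^ 2) p := by
    refine le_min ?_ ?_
    · have : (#A : ℝ) ^ (1 + g) ≤ (#A : ℝ) ^ (2 : ℝ) :=
        Real.rpow_le_rpow_of_exponent_le hn (by have := min_le_right γ 1; linarith)
      rw [Real.rpow_two] at this
      nlinarith
    · have h1 : (#A : ℝ) ^ (1 + g) ≤ (#A : ℝ) ^ (1 + γ) :=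
        Real.rpow_le_rpow_of_exponent_le hn (by have := min_le_left γ 1; linarith)
      have h3 : (#A : ℝ) ^ (1 + γ) ≤ ((p : ℝ) ^ (1 - γ)) ^ (1 + γ) :=
        Real.rpow_le_rpow (by linarith) hcard (by linarith)
      rw [← Real.rpow_mul (by linarith)] at h3
      have h4 : (p : ℝ) ^ ((1 - γ) * (1 + γ)) ≤ (p : ℝ) ^ (1 : ℝ) :=
        Real.rpow_le_rpow_of_exponent_le hp1 (by nlinarith)
      rw [Real.rpow_one] at h4
      linarith
  have hMA : M / #A' ≤ 2 * M / #A := by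
    rw [div_le_div_iff₀ (by linarith) (by linarith)]
    nlinarith
  have hup : (#A : ℝ) ^ (1 + g) / 4 ≤ 1024 * (2 * M / #A) ^ 32 * #A := by
    refine hlow.trans (hmain.trans ?_)
    have : 0 ≤ M / #A' := by positivity
    gcongr
  have hA0 : (0 : ℝ) < #A := by linarith
  refine le_of_pow_le_pow_left₀ (n := 32) (by norm_num) (by linarith) ?_
  have hpow : ((#A : ℝ) ^ (1 + g / 32)) ^ 32 = (#A : ℝ) ^ (1 + g) * (#A : ℝ) ^ 31 := by
    rw [← Real.rpow_natCast, ← Real.rpow_natCast, ← Real.rpow_mul hA0.le, ← Real.rpow_add hA0]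
    congr 1
    push_cast
    ring
  rw [mul_pow, hpow]
  have hup2 : (#A : ℝ) ^ (1 + g) * (#A : ℝ) ^ 31 ≤ 4096 * 2 ^ 32 * M ^ 32 := by
    have := mul_le_mul_of_nonneg_right hup (show (0 : ℝ) ≤ (#A : ℝ) ^ 31 by positivity)
    have e : 1024 * (2 * M / #A) ^ 32 * #A * (#A : ℝ) ^ 31 = 1024 * 2 ^ 32 * M ^ 32 := by
      field_simp
    rw [e] at this
    linarith
  have hM32 : 0 ≤ M ^ 32 := by positivity
  nlinarith
end

section
/- Let p be a prime and let ρ: 𝔽_p → ℝ be a probability density (ρ ≥ 0, ∑_{x∈𝔽_p} ρ(x) = 1). Define ρ_Y(y) = ∑_{x∈𝔽_p} ρ(x)ρ(x−y) for y ∈ 𝔽_p. Let α ≥ 1 be a real number such that ∑_{x∈𝔽_p} ∑_{y∈𝔽_p} ρ(x)·ρ_Y(y)·ρ_Y(xy) ≥ ρ_Y(0)/α (where xy is the product in 𝔽_p). Assume moreover that ρ(0) ≤ 1/(4α) and ρ_Y(0) ≤ 1/(4α). Then there exists a subset A ⊆ 𝔽_p \ {0} such that 1/(2³¹·α¹⁰·ρ_Y(0))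 ≤ |A| ≤ 8α/ρ_Y(0) and max(|A+A|, |A·A|) ≤ 2⁸⁷⁸·α²⁹⁴·|A|. -/
open scoped Pointwise

theorem bsg_graph {V : Type*} [Fintype V] [DecidableEq V] (S : Finset V) (W : V → ℝ)
    (hW0 : ∀ x, 0 ≤ W x) (hW1 : ∀ x, W x ≤ 1) (G : V → V → Prop) [DecidableRel G]
    (M κ : ℝ) (hM : 0 < M) (hκ : 0 < κ) (hWM : ∑ x ∈ S, W x ≤ M)
    (hG : κ * M ^ 2 ≤ ∑ y ∈ S, ∑ z ∈ S, if G y z then W y * W z else 0) :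
    ∃ A ⊆ S, κ * M / 2 ≤ ∑ x ∈ A, W x ∧ ∀ y ∈ A, ∀ y' ∈ A,
      κ ^ 5 * M ^ 3 / 2 ^ 14 ≤ (((S ×ˢ S ×ˢ S).filter (fun t : V × V × V =>
        G y t.2.1 ∧ G t.1 t.2.1 ∧ G t.1 t.2.2 ∧ G y' t.2.2)).card : ℝ) := by
  classical
  obtain ⟨g, hg⟩ : ∃ g : V → V → ℝ, ∀ y z, g y z = if G y z then 1 else 0 := ⟨_, fun _ _ => rfl⟩
  have hg0 : ∀ y z, 0 ≤ g y z := by intro y z; rw [hg]; split_ifs <;> norm_num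
  have hg1 : ∀ y z, g y z ≤ 1 := by intro y z; rw [hg]; split_ifs <;> norm_num
  obtain ⟨n, hn⟩ : ∃ n : V → ℝ, ∀ z, n z = ∑ y ∈ S, W y * g y z := ⟨_, fun _ => rfl⟩
  obtain ⟨c, hc⟩ : ∃ c : V → V → ℝ, ∀ y y', c y y' = ∑ z ∈ S, W z * (g y z * g y' z) :=
    ⟨_, fun _ _ => rfl⟩
  set ε : ℝ := κ ^ 2 * M / 64 with hε
  have hεpos : 0 < ε := by positivity
  obtain ⟨b, hb⟩ : ∃ b : V → V → ℝ, ∀ y y', b y y' = if c y y' < ε then 1 else 0 :=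
    ⟨_, fun _ _ => rfl⟩
  have hb0 : ∀ y z, 0 ≤ b y z := by intro y z; rw [hb]; split_ifs <;> norm_num
  have hc0 : ∀ y z, 0 ≤ c y z := by
    intro y z; rw [hc]
    exact Finset.sum_nonneg fun x _ => mul_nonneg (hW0 x) (mul_nonneg (hg0 _ _) (hg0 _ _))
  obtain ⟨nb, hnb⟩ : ∃ nb : V → V → ℝ, ∀ z y, nb z y = ∑ y' ∈ S, W y' * g y' z * b y y' :=
    ⟨_, fun _ _ => rfl⟩
  obtain ⟨B, hB⟩ : ∃ B : V → ℝ, ∀ z, B z = ∑ y ∈ S, W y * g y z * nb z y := ⟨_, fun _ => rfl⟩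
  have hsW0 : 0 ≤ ∑ x ∈ S, W x := Finset.sum_nonneg fun x _ => hW0 x
  have hnb0 : ∀ z y, 0 ≤ nb z y := by
    intro z y; rw [hnb]
    exact Finset.sum_nonneg fun x _ => mul_nonneg (mul_nonneg (hW0 x) (hg0 _ _)) (hb0 _ _)
  have hB0 : ∀ z, 0 ≤ B z := by
    intro z; rw [hB]
    exact Finset.sum_nonneg fun x _ => mul_nonneg (mul_nonneg (hW0 x) (hg0 _ _)) (hnb0 _ _)
  have hn0 : ∀ z, 0 ≤ n z := by
    intro z; rw [hn]
    exact Finset.sum_nonneg fun x _ => mul_nonneg (hW0 x) (hg0 _ _)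
  -- first moment
  have h1 : κ * M ^ 2 ≤ ∑ z ∈ S, W z * n z := by
    refine hG.trans (le_of_eq ?_)
    rw [Finset.sum_comm]
    refine Finset.sum_congr rfl fun z _ => ?_
    rw [hn, Finset.mul_sum]
    refine Finset.sum_congr rfl fun y _ => ?_
    rw [hg]; split_ifs <;> ring
  have h2 : κ ^ 2 * M ^ 3 ≤ ∑ z ∈ S, W z * n z ^ 2 := by
    have hcs : (∑ z ∈ S, W z * n z) ^ 2 ≤ (∑ z ∈ S, W z) * ∑ z ∈ S, W z * n z ^ 2 := by
      apply Finset.sum_sq_le_sum_mul_sum_of_sq_le_mul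
      · intro i _; exact hW0 i
      · intro i _; exact mul_nonneg (hW0 i) (sq_nonneg _)
      · intro i _; exact le_of_eq (by ring)
    have h0 : 0 ≤ ∑ z ∈ S, W z * n z ^ 2 :=
      Finset.sum_nonneg fun x _ => mul_nonneg (hW0 x) (sq_nonneg _)
    have h3 : (κ * M ^ 2) ^ 2 ≤ M * ∑ z ∈ S, W z * n z ^ 2 :=
      (pow_le_pow_left₀ (by positivity) h1 2).trans
        (hcs.trans (mul_le_mul_of_nonneg_right hWM h0))
    have h4 : M * (κ ^ 2 * M ^ 3) ≤ M * ∑ z ∈ S, W z * n z ^ 2 := by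
      refine le_trans (le_of_eq ?_) h3; ring
    exact le_of_mul_le_mul_left h4 hM
  have h3 : ∑ z ∈ S, W z * B z ≤ ε * M ^ 2 := by
    have e1 : ∑ z ∈ S, W z * B z = ∑ y ∈ S, ∑ y' ∈ S, W y * W y' * (b y y' * c y y') := by
      simp only [hB, hnb, hc, Finset.mul_sum]
      rw [Finset.sum_comm]
      refine Finset.sum_congr rfl fun y _ => ?_
      rw [Finset.sum_comm]
      refine Finset.sum_congr rfl fun y' _ => ?_
      refine Finset.sum_congr rfl fun z _ => ?_
      ring
    rw [e1]
    calc _ ≤ ∑ y ∈ S, ∑ y' ∈ S, W y * W y' * ε := by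
          refine Finset.sum_le_sum fun y _ => Finset.sum_le_sum fun y' _ => ?_
          refine mul_le_mul_of_nonneg_left ?_ (mul_nonneg (hW0 _) (hW0 _))
          rw [hb]; split_ifs with h
          · linarith
          · linarith
      _ = ε * ((∑ y ∈ S, W y) * (∑ y ∈ S, W y)) := by
          rw [Finset.sum_mul_sum, Finset.mul_sum]
          refine Finset.sum_congr rfl fun y _ => ?_
          rw [Finset.mul_sum]
          refine Finset.sum_congr rfl fun y' _ => ?_
          ring
      _ ≤ ε * M ^ 2 := by
          refine mul_le_mul_of_nonneg_left ?_ hεpos.le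
          nlinarith
  obtain ⟨z, hzS, hz⟩ : ∃ z ∈ S, κ ^ 2 * M ^ 2 / 2 ≤ n z ^ 2 - 16 * B z := by
    by_contra! hcon
    have h4 : ∑ z ∈ S, W z * (n z ^ 2 - 16 * B z) ≤ ∑ z ∈ S, W z * (κ ^ 2 * M ^ 2 / 2) :=
      Finset.sum_le_sum fun z hz => mul_le_mul_of_nonneg_left (hcon z hz).le (hW0 z)
    rw [← Finset.sum_mul] at h4
    have h5 : ∑ z ∈ S, W z * (n z ^ 2 - 16 * B z) =
        ∑ z ∈ S, W z * n z ^ 2 - 16 * ∑ z ∈ S, W z * B z := by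
      rw [Finset.mul_sum, ← Finset.sum_sub_distrib]
      refine Finset.sum_congr rfl fun z _ => ?_
      ring
    have h6 : (∑ z ∈ S, W z) * (κ ^ 2 * M ^ 2 / 2) ≤ M * (κ ^ 2 * M ^ 2 / 2) :=
      mul_le_mul_of_nonneg_right hWM (by positivity)
    have h7 : ε * M ^ 2 = κ ^ 2 * M ^ 3 / 64 := by rw [hε]; ring
    have h8 : 0 < κ ^ 2 * M ^ 3 := by positivity
    have h9 : M * (κ ^ 2 * M ^ 2 / 2) = κ ^ 2 * M ^ 3 / 2 := by ring
    linarith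
  have hκM : 0 < κ * M := by positivity
  have hnlow : 2 / 3 * (κ * M) ≤ n z := by
    have : (2 / 3 * (κ * M)) ^ 2 ≤ n z ^ 2 := by
      have := hB0 z
      nlinarith [sq_nonneg (κ * M)]
    exact le_of_sq_le_sq this (hn0 z)
  have hnpos : 0 < n z := by linarith
  have hBn : 16 * B z ≤ n z ^ 2 := by nlinarith [sq_nonneg (κ * M)]
  refine ⟨S.filter (fun y => G y z ∧ nb z y ≤ n z / 4), Finset.filter_subset _ _, ?_, ?_⟩
  · have key : n z * n z ≤ n z * (∑ y ∈ S.filter (fun y => G y z ∧ nb z y ≤ n z / 4), W y)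
        + 4 * B z := by
      rw [Finset.sum_filter, hB, Finset.mul_sum, Finset.mul_sum, ← Finset.sum_add_distrib]
      nth_rewrite 2 [hn]
      rw [Finset.mul_sum]
      refine Finset.sum_le_sum fun y _ => ?_
      have a1 := hW0 y
      have a2 := hnb0 z y
      by_cases hGy : G y z
      · have e : g y z = 1 := by rw [hg, if_pos hGy]
        rw [e]
        by_cases hq : nb z y ≤ n z / 4
        · rw [if_pos ⟨hGy, hq⟩]
          nlinarith [mul_nonneg a1 a2]
        · rw [if_neg (fun h => hq h.2)]
          push Not at hq
          nlinarith [mul_le_mul_of_nonneg_left hq.le a1]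
      · have e : g y z = 0 := by rw [hg, if_neg hGy]
        rw [e, if_neg (fun h => hGy h.1)]
        simp
    have : n z * (3 / 4 * n z) ≤
        n z * (∑ y ∈ S.filter (fun y => G y z ∧ nb z y ≤ n z / 4), W y) := by nlinarith
    have := le_of_mul_le_mul_left this hnpos
    linarith
  · intro y hy y' hy'
    rw [Finset.mem_filter] at hy hy'
    have hcard : ((((S ×ˢ S ×ˢ S).filter (fun t : V × V × V =>
        G y t.2.1 ∧ G t.1 t.2.1 ∧ G t.1 t.2.2 ∧ G y' t.2.2)).card : ℕ) : ℝ) =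
        ∑ w ∈ S, (∑ z1 ∈ S, g y z1 * g w z1) * (∑ z2 ∈ S, g y' z2 * g w z2) := by
      rw [Finset.card_filter]
      push_cast
      rw [Finset.sum_product]
      refine Finset.sum_congr rfl fun w _ => ?_
      rw [Finset.sum_product, Finset.sum_mul_sum]
      refine Finset.sum_congr rfl fun z1 _ => Finset.sum_congr rfl fun z2 _ => ?_
      simp only [hg]
      by_cases h1 : G y z1 <;> by_cases h2 : G w z1 <;> by_cases h3 : G w z2 <;>
        by_cases h4 : G y' z2 <;> simp [h1, h2, h3, h4]
    rw [hcard]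
    have hcle : ∀ u w, c u w ≤ ∑ z1 ∈ S, g u z1 * g w z1 := by
      intro u w
      rw [hc]
      refine Finset.sum_le_sum fun z1 _ => ?_
      have := mul_nonneg (hg0 u z1) (hg0 w z1)
      nlinarith [hW1 z1]
    have hstep : ∑ w ∈ S, (W w * g w z * (1 - b y w - b y' w)) * ε ^ 2 ≤
        ∑ w ∈ S, (∑ z1 ∈ S, g y z1 * g w z1) * (∑ z2 ∈ S, g y' z2 * g w z2) := by
      refine Finset.sum_le_sum fun w _ => ?_
      have q : c y w * c y' w ≤ (∑ z1 ∈ S, g y z1 * g w z1) * (∑ z2 ∈ S, g y' z2 * g w z2) :=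
        mul_le_mul (hcle _ _) (hcle _ _) (hc0 _ _) ((hc0 _ _).trans (hcle _ _))
      refine le_trans ?_ q
      have wg0 : 0 ≤ W w * g w z := mul_nonneg (hW0 _) (hg0 _ _)
      have wg1 : W w * g w z ≤ 1 := mul_le_one₀ (hW1 _) (hg0 _ _) (hg1 _ _)
      have cc := mul_nonneg (hc0 y w) (hc0 y' w)
      have ε2 : 0 ≤ ε ^ 2 := sq_nonneg _
      rw [hb, hb]
      by_cases p1 : c y w < ε
      · rw [if_pos p1]
        have : (1 : ℝ) - 1 - (if c y' w < ε then 1 else 0) ≤ 0 := by split_ifs <;> norm_num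
        exact (mul_nonpos_of_nonpos_of_nonneg (mul_nonpos_of_nonneg_of_nonpos wg0 this) ε2).trans cc
      · by_cases p2 : c y' w < ε
        · rw [if_neg p1, if_pos p2]; simpa using cc
        · rw [if_neg p1, if_neg p2]
          push Not at p1 p2
          have : ε * ε ≤ c y w * c y' w := mul_le_mul p1 p2 hεpos.le (hc0 _ _)
          nlinarith
    refine le_trans ?_ hstep
    rw [← Finset.sum_mul]
    have e2 : ∑ w ∈ S, W w * g w z * (1 - b y w - b y' w) = n z - nb z y - nb z y' := by
      rw [hn, hnb, hnb, ← Finset.sum_sub_distrib, ← Finset.sum_sub_distrib]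
      refine Finset.sum_congr rfl fun w _ => ?_
      ring
    rw [e2]
    have e3 : κ * M / 4 ≤ n z - nb z y - nb z y' := by
      have := hy.2.2
      have := hy'.2.2
      linarith
    calc κ ^ 5 * M ^ 3 / 2 ^ 14 = κ * M / 4 * ε ^ 2 := by rw [hε]; ring
      _ ≤ _ := mul_le_mul_of_nonneg_right e3 (sq_nonneg _)

theorem bsg_energy {V : Type*} [Fintype V] [DecidableEq V] (S : Finset V) (W : V → ℝ)
    (hW0 : ∀ x, 0 ≤ W x) (hW1 : ∀ x, W x ≤ 1) (d : V → V → V) (F : V × V × V × V → V)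
    (hd1 : ∀ y ∈ S, ∀ z ∈ S, ∀ z' ∈ S, d y z = d y z' → z = z')
    (hd2 : ∀ z ∈ S, ∀ y ∈ S, ∀ y' ∈ S, d y z = d y' z → y = y')
    (hF : ∀ y ∈ S, ∀ y' ∈ S, ∀ w ∈ S, ∀ z ∈ S, ∀ z' ∈ S,
      F (d y z, d w z, d w z', d y' z') = d y y')
    (M K : ℝ) (hM : 0 < M) (hK : 0 < K) (hWM : ∑ x ∈ S, W x ≤ M)
    (hE : M ^ 3 / K ≤ ∑ x, (∑ y ∈ S, ∑ z ∈ S, if d y z = x then W y * W z else 0) ^ 2) :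
    ∃ A ⊆ S, M / (4 * K) ≤ ∑ x ∈ A, W x ∧
      ((Finset.image₂ d A A).card : ℝ) ≤ 2 ^ 23 * K ^ 9 * M := by
  classical
  obtain ⟨f, hf⟩ : ∃ f : V → ℝ, ∀ x, f x =
    ∑ y ∈ S, ∑ z ∈ S, if d y z = x then W y * W z else 0 := ⟨_, fun _ => rfl⟩
  simp only [← hf] at hE
  have hsW0 : 0 ≤ ∑ x ∈ S, W x := Finset.sum_nonneg fun x _ => hW0 x
  have hf0 : ∀ x, 0 ≤ f x := by
    intro x; rw [hf]
    refine Finset.sum_nonneg fun y _ => Finset.sum_nonneg fun z _ => ?_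
    split_ifs
    · exact mul_nonneg (hW0 _) (hW0 _)
    · exact le_rfl
  have hfM : ∀ x, f x ≤ M := by
    intro x; rw [hf]
    refine le_trans (Finset.sum_le_sum fun y hy => ?_) hWM
    by_cases h : ∃ z ∈ S, d y z = x
    · obtain ⟨z, hz, hx⟩ := h
      rw [Finset.sum_eq_single_of_mem z hz]
      · rw [if_pos hx]
        nlinarith [hW0 y, hW1 z]
      · intro z' hz' hne
        rw [if_neg]
        intro h'
        exact hne (hd1 y hy z' hz' z hz (h'.trans hx.symm))
    · push Not at h
      rw [Finset.sum_eq_zero]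
      · exact hW0 y
      · intro z hz
        rw [if_neg (h z hz)]
  have hsf : ∑ x, f x ≤ M ^ 2 := by
    have : ∑ x, f x = (∑ y ∈ S, W y) * (∑ y ∈ S, W y) := by
      simp only [hf]
      rw [Finset.sum_comm, Finset.sum_mul_sum]
      refine Finset.sum_congr rfl fun y _ => ?_
      rw [Finset.sum_comm]
      refine Finset.sum_congr rfl fun z _ => ?_
      simp
    rw [this]; nlinarith
  set P : Finset V := Finset.univ.filter (fun x => M / (2 * K) ≤ f x) with hP
  have hPcard : (P.card : ℝ) ≤ 2 * K * M := by
    have h1 : (P.card : ℝ) * (M / (2 * K)) ≤ M ^ 2 := by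
      calc (P.card : ℝ) * (M / (2 * K)) = ∑ x ∈ P, M / (2 * K) := by simp
        _ ≤ ∑ x ∈ P, f x := Finset.sum_le_sum fun x hx => (Finset.mem_filter.1 hx).2
        _ ≤ ∑ x, f x := Finset.sum_le_sum_of_subset_of_nonneg (Finset.subset_univ _)
            fun x _ _ => hf0 x
        _ ≤ M ^ 2 := hsf
    have h2 : (P.card : ℝ) * (M / (2 * K)) ≤ (2 * K * M) * (M / (2 * K)) := by
      refine h1.trans (le_of_eq ?_)
      field_simp
    exact le_of_mul_le_mul_right h2 (by positivity)
  have hPf : M ^ 2 / (2 * K) ≤ ∑ x ∈ P, f x := by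
    have h1 : ∑ x, f x ^ 2 ≤ M * ∑ x ∈ P, f x + M / (2 * K) * ∑ x, f x := by
      rw [hP, Finset.sum_filter, Finset.mul_sum, Finset.mul_sum, ← Finset.sum_add_distrib]
      refine Finset.sum_le_sum fun x _ => ?_
      have a1 := hf0 x
      have a2 := hfM x
      have a3 : 0 ≤ M / (2 * K) := by positivity
      split_ifs with h
      · nlinarith [mul_nonneg a3 a1]
      · push Not at h
        nlinarith
    have h2 : M / (2 * K) * ∑ x, f x ≤ M / (2 * K) * M ^ 2 :=
      mul_le_mul_of_nonneg_left hsf (by positivity)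
    have h3 : M * (M ^ 2 / (2 * K)) ≤ M * ∑ x ∈ P, f x := by
      have e1 : M * (M ^ 2 / (2 * K)) = M ^ 3 / K / 2 := by field_simp
      have e2 : M / (2 * K) * M ^ 2 = M ^ 3 / K / 2 := by field_simp
      linarith
    exact le_of_mul_le_mul_left h3 hM
  have hG : (1 / (2 * K)) * M ^ 2 ≤
      ∑ y ∈ S, ∑ z ∈ S, if d y z ∈ P then W y * W z else 0 := by
    refine le_trans (le_of_eq (by ring)) (hPf.trans (le_of_eq ?_))
    simp only [hf]
    rw [Finset.sum_comm]
    refine Finset.sum_congr rfl fun y _ => ?_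
    rw [Finset.sum_comm]
    refine Finset.sum_congr rfl fun z _ => ?_
    rw [Finset.sum_ite_eq]
  obtain ⟨A, hAS, hA, hcnt⟩ := bsg_graph S W hW0 hW1 (fun y z => d y z ∈ P) M (1 / (2 * K)) hM
    (by positivity) hWM hG
  refine ⟨A, hAS, le_trans (le_of_eq (by field_simp; norm_num)) hA, ?_⟩
  set T : ℝ := (1 / (2 * K)) ^ 5 * M ^ 3 / 2 ^ 14 with hT
  have hTpos : 0 < T := by positivity
  set Q : Finset (V × V × V × V) := P ×ˢ P ×ˢ P ×ˢ P with hQ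
  have hfib : ∀ x ∈ Finset.image₂ d A A, T ≤ ((Q.filter (fun q => F q = x)).card : ℝ) := by
    intro x hx
    obtain ⟨y, hy, y', hy', rfl⟩ := Finset.mem_image₂.1 hx
    refine (hcnt y hy y' hy').trans ?_
    norm_cast
    refine Finset.card_le_card_of_injOn
      (fun t => (d y t.2.1, d t.1 t.2.1, d t.1 t.2.2, d y' t.2.2)) ?_ ?_
    · rintro ⟨w, z1, z2⟩ ht
      simp only [Finset.coe_filter, Finset.mem_product, Set.mem_ofPred_eq, hQ] at ht ⊢
      exact ⟨⟨ht.2.1, ht.2.2.1, ht.2.2.2.1, ht.2.2.2.2⟩,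
        hF y (hAS hy) y' (hAS hy') w ht.1.1 z1 ht.1.2.1 z2 ht.1.2.2⟩
    · rintro ⟨w, z1, z2⟩ ht ⟨w', z1', z2'⟩ ht' heq
      simp only [Finset.coe_filter, Finset.mem_product, Set.mem_ofPred_eq, Prod.mk.injEq] at ht ht' heq
      obtain ⟨q1, q2, q3, q4⟩ := heq
      have r1 : z1 = z1' := hd1 y (hAS hy) _ ht.1.2.1 _ ht'.1.2.1 q1
      subst r1
      have r2 : w = w' := hd2 z1 ht.1.2.1 _ ht.1.1 _ ht'.1.1 q2
      subst r2
      have r3 : z2 = z2' := hd1 w ht.1.1 _ ht.1.2.2 _ ht'.1.2.2 q3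
      rw [r3]
  have hsum : ((Finset.image₂ d A A).card : ℝ) * T ≤ (P.card : ℝ) ^ 4 := by
    calc ((Finset.image₂ d A A).card : ℝ) * T = ∑ x ∈ Finset.image₂ d A A, T := by simp
      _ ≤ ∑ x ∈ Finset.image₂ d A A, ((Q.filter (fun q => F q = x)).card : ℝ) :=
          Finset.sum_le_sum hfib
      _ ≤ ∑ x, ((Q.filter (fun q => F q = x)).card : ℝ) :=
          Finset.sum_le_sum_of_subset_of_nonneg (Finset.subset_univ _) fun x _ _ => by positivity
      _ = (Q.card : ℝ) := by
          rw [Finset.card_eq_sum_card_fiberwise (f := F) (s := Q) (t := Finset.univ)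
            (fun _ _ => Finset.mem_coe.2 (Finset.mem_univ _))]
          push_cast; rfl
      _ = (P.card : ℝ) ^ 4 := by
          rw [hQ]; simp only [Finset.card_product]; push_cast; ring
  have h4 : (P.card : ℝ) ^ 4 ≤ (2 * K * M) ^ 4 := pow_le_pow_left₀ (by positivity) hPcard 4
  have h5 : ((Finset.image₂ d A A).card : ℝ) * T ≤ (2 ^ 23 * K ^ 9 * M) * T := by
    refine hsum.trans (h4.trans (le_of_eq ?_))
    rw [hT]; field_simp
  exact le_of_mul_le_mul_right h5 hTpos

theorem mul_ruzsa {k : Type*} [Field k] [DecidableEq k] (A : Finset k) (hA : (0 : k) ∉ A) :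
    (A * A).card * A.card ≤ (A / A).card * (A / A).card := by
  classical
  obtain ⟨U, rfl⟩ : ∃ U : Finset kˣ, U.image (fun u : kˣ => (u : k)) = A := by
    refine ⟨A.attach.image (fun a => Units.mk0 a.1 (fun h => hA (h ▸ a.2))), ?_⟩
    ext x; simp
  have hinj : Function.Injective (fun u : kˣ => (u : k)) := fun _ _ h => Units.ext h
  have h1 : (U.image (fun u : kˣ => (u : k))) * (U.image (fun u : kˣ => (u : k)))
      = (U * U).image (fun u : kˣ => (u : k)) := by
    ext x; simp [Finset.mem_mul, Finset.mem_image]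
  have h2 : (U.image (fun u : kˣ => (u : k))) / (U.image (fun u : kˣ => (u : k)))
      = (U / U).image (fun u : kˣ => (u : k)) := by
    ext x; simp [Finset.mem_div, Finset.mem_image]
  rw [h1, h2, Finset.card_image_of_injective _ hinj, Finset.card_image_of_injective _ hinj,
    Finset.card_image_of_injective _ hinj]
  exact Finset.ruzsa_triangle_inequality_mul_div_div U U U

set_option exponentiation.threshold 2000 in
set_option maxHeartbeats 2000000 in
theorem exists_set_with_small_sumset_and_productset (p : ℕ) [Fact p.Prime]
    (ρ : ZMod p → ℝ) (hρ0 : ∀ x, 0 ≤ ρ x) (hρ1 : ∑ x, ρ x = 1)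
    (ρY : ZMod p → ℝ) (hρY : ∀ y, ρY y = ∑ x, ρ x * ρ (x - y))
    (α : ℝ) (hα : 1 ≤ α)
    (hmain : ρY 0 / α ≤ ∑ x, ∑ y, ρ x * ρY y * ρY (x * y))
    (h0 : ρ 0 ≤ 1 / (4 * α)) (hY0 : ρY 0 ≤ 1 / (4 * α)) :
    ∃ A : Finset (ZMod p), (0 : ZMod p) ∉ A ∧
      1 / (2 ^ 31 * α ^ 10 * ρY 0) ≤ (A.card : ℝ) ∧ (A.card : ℝ) ≤ 8 * α / ρY 0 ∧
      (max (A + A).card (A * A).card : ℝ) ≤ 2 ^ 878 * α ^ 294 * (A.card : ℝ) := by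
  have hα0 : 0 < α := by linarith
  obtain ⟨β, hβ⟩ : ∃ β, β = ρY 0 := ⟨_, rfl⟩
  rw [← hβ] at hmain hY0 ⊢
  have hβsq : β = ∑ x, ρ x ^ 2 := by
    rw [hβ, hρY]; refine Finset.sum_congr rfl fun x _ => ?_; rw [sub_zero]; ring
  have hβpos : 0 < β := by
    have hnn : 0 ≤ β := by rw [hβsq]; exact Finset.sum_nonneg fun x _ => sq_nonneg _
    rcases hnn.lt_or_eq with h | h
    · exact h
    · exfalso
      rw [hβsq] at h
      have h' := (Finset.sum_eq_zero_iff_of_nonneg (fun x _ => sq_nonneg (ρ x))).1 h.symm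
      have : ∑ x, ρ x = 0 := Finset.sum_eq_zero fun x hx => by
        have := h' x hx; simpa using this
      linarith
  have hY0' : ∀ y, 0 ≤ ρY y := fun y => by
    rw [hρY]; exact Finset.sum_nonneg fun x _ => mul_nonneg (hρ0 _) (hρ0 _)
  have hshift : ∀ (g : ZMod p → ℝ) (a : ZMod p), ∑ x, g (x - a) = ∑ x, g x := fun g a =>
    Fintype.sum_equiv (Equiv.subRight a) _ _ (fun _ => rfl)
  have hYle : ∀ y, ρY y ≤ β := by
    intro y
    have h1 : ρY y ≤ ∑ x, (ρ x ^ 2 / 2 + ρ (x - y) ^ 2 / 2) := by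
      rw [hρY]; refine Finset.sum_le_sum fun x _ => ?_
      nlinarith [sq_nonneg (ρ x - ρ (x - y))]
    rw [Finset.sum_add_distrib, hshift (fun x => ρ x ^ 2 / 2) y, ← Finset.sum_div, ← hβsq] at h1
    linarith
  have hYsum : ∑ y, ρY y = 1 := by
    simp only [hρY]
    rw [Finset.sum_comm]
    have : ∀ x, ∑ y, ρ x * ρ (x - y) = ρ x := by
      intro x
      rw [← Finset.mul_sum, Fintype.sum_equiv (Equiv.subLeft x) (fun y => ρ (x - y)) ρ
        (fun _ => rfl), hρ1, mul_one]
    simp only [this, hρ1]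
  have hscale : ∀ x : ZMod p, x ≠ 0 → ∑ y, ρY (x * y) = 1 := by
    intro x hx
    rw [Fintype.sum_equiv (Equiv.mulLeft₀ x hx) (fun y => ρY (x * y)) ρY (fun _ => rfl), hYsum]
  set δ : ℝ := β / (8 * α) with hδ
  have hδ0 : 0 < δ := by positivity
  set S : Finset (ZMod p) := Finset.univ.filter (fun y => y ≠ 0 ∧ δ ≤ ρY y) with hS
  have hSmem : ∀ y, y ∈ S ↔ y ≠ 0 ∧ δ ≤ ρY y := fun y => by simp [hS]
  have hScard : (S.card : ℝ) ≤ 8 * α / β := by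
    have h1 : (S.card : ℝ) * δ ≤ 1 := by
      calc (S.card : ℝ) * δ = ∑ x ∈ S, δ := by simp
        _ ≤ ∑ x ∈ S, ρY x := Finset.sum_le_sum fun x hx => ((hSmem x).1 hx).2
        _ ≤ ∑ x, ρY x := Finset.sum_le_sum_of_subset_of_nonneg (Finset.subset_univ _)
            fun x _ _ => hY0' x
        _ = 1 := hYsum
    have h2 : (S.card : ℝ) * δ ≤ (8 * α / β) * δ := by
      refine h1.trans (le_of_eq ?_); rw [hδ]; field_simp
    exact le_of_mul_le_mul_right h2 hδ0
  -- step 1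
  obtain ⟨W, hW⟩ : ∃ W : ZMod p → ℝ, ∀ y, W y = if y ∈ S then ρY y / β else 0 :=
    ⟨_, fun _ => rfl⟩
  have hW0 : ∀ x, 0 ≤ W x := by
    intro x; rw [hW]; split_ifs
    · exact div_nonneg (hY0' x) hβpos.le
    · exact le_rfl
  have hW1 : ∀ x, W x ≤ 1 := by
    intro x; rw [hW]; split_ifs
    · exact (div_le_one hβpos).2 (hYle x)
    · norm_num
  have hWM : ∑ x ∈ S, W x ≤ 1 / β := by
    calc ∑ x ∈ S, W x ≤ ∑ x, W x := Finset.sum_le_sum_of_subset_of_nonneg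
            (Finset.subset_univ _) fun x _ _ => hW0 x
      _ ≤ ∑ x, ρY x / β := by
          refine Finset.sum_le_sum fun x _ => ?_
          rw [hW]; split_ifs
          · exact le_rfl
          · exact div_nonneg (hY0' x) hβpos.le
      _ = 1 / β := by rw [← Finset.sum_div, hYsum]
  have hX : 1 / (4 * α * β) ≤ ∑ x, ρ x * ∑ y, W y * W (x * y) := by
    have hpt : ∀ x y, ρ x * ρY y * ρY (x * y) ≤ β ^ 2 * (ρ x * (W y * W (x * y)))
        + (if x = 0 then ρ x * ρY y * β else 0) + (if y = 0 then ρ x * β ^ 2 else 0)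
        + (if x = 0 then 0 else ρ x * (δ * ρY (x * y))) + δ * (ρ x * ρY y) := by
      intro x y
      have a1 := hρ0 x
      have a2 := hY0' y
      have a3 := hY0' (x * y)
      have a4 := hYle y
      have a5 := hYle (x * y)
      have b1 : 0 ≤ β ^ 2 * (ρ x * (W y * W (x * y))) :=
        mul_nonneg (sq_nonneg _) (mul_nonneg a1 (mul_nonneg (hW0 _) (hW0 _)))
      have b3 : 0 ≤ (if y = 0 then ρ x * β ^ 2 else 0) := by
        split_ifs
        · positivity
        · exact le_rfl
      have b5 : 0 ≤ δ * (ρ x * ρY y) := by positivity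
      by_cases hx : x = 0
      · rw [if_pos hx, if_pos hx]
        have : ρ x * ρY y * ρY (x * y) ≤ ρ x * ρY y * β :=
          mul_le_mul_of_nonneg_left a5 (mul_nonneg a1 a2)
        linarith
      rw [if_neg hx, if_neg hx]
      have b4 : 0 ≤ ρ x * (δ * ρY (x * y)) := by positivity
      by_cases hy : y = 0
      · rw [if_pos hy]
        have : ρ x * (ρY y * ρY (x * y)) ≤ ρ x * (β * β) :=
          mul_le_mul_of_nonneg_left (mul_le_mul a4 a5 a3 hβpos.le) a1
        nlinarith
      rw [if_neg hy]
      by_cases c1 : δ ≤ ρY y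
      · by_cases c2 : δ ≤ ρY (x * y)
        · have e1 : W y = ρY y / β := by rw [hW, if_pos ((hSmem y).2 ⟨hy, c1⟩)]
          have e2 : W (x * y) = ρY (x * y) / β := by
            rw [hW, if_pos ((hSmem _).2 ⟨mul_ne_zero hx hy, c2⟩)]
          have e3 : β ^ 2 * (ρ x * (W y * W (x * y))) = ρ x * ρY y * ρY (x * y) := by
            rw [e1, e2]; field_simp
          linarith
        · push Not at c2
          have := mul_le_mul_of_nonneg_left c2.le (mul_nonneg a1 a2)
          nlinarith
      · push Not at c1
        have := mul_le_mul_of_nonneg_left c1.le (mul_nonneg a1 a3)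
        nlinarith
    have hsum := hmain.trans (Finset.sum_le_sum fun x _ => Finset.sum_le_sum fun y _ => hpt x y)
    simp only [Finset.sum_add_distrib] at hsum
    have t1 : ∑ x, ∑ y, β ^ 2 * (ρ x * (W y * W (x * y))) =
        β ^ 2 * ∑ x, ρ x * ∑ y, W y * W (x * y) := by
      simp only [Finset.mul_sum]
    have t2 : ∑ x, ∑ y, (if x = 0 then ρ x * ρY y * β else 0) = ρ 0 * β := by
      rw [Finset.sum_eq_single (0 : ZMod p)]
      · simp only [if_true]
        rw [← Finset.sum_mul, ← Finset.mul_sum, hYsum, mul_one]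
      · intro x _ hx; simp [hx]
      · simp
    have t3 : ∑ x, ∑ y : ZMod p, (if y = 0 then ρ x * β ^ 2 else 0) = β ^ 2 := by
      simp only [Finset.sum_ite_eq', Finset.mem_univ, if_true]
      rw [← Finset.sum_mul, hρ1, one_mul]
    have t4 : ∑ x, ∑ y, (if x = 0 then 0 else ρ x * (δ * ρY (x * y))) ≤ δ := by
      calc _ ≤ ∑ x, ρ x * δ := by
            refine Finset.sum_le_sum fun x _ => ?_
            by_cases hx : x = 0
            · simp only [hx, if_true, Finset.sum_const_zero]
              exact mul_nonneg (hρ0 _) hδ0.le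
            · simp only [hx, if_false]
              rw [← Finset.mul_sum, ← Finset.mul_sum, hscale x hx, mul_one]
        _ = δ := by rw [← Finset.sum_mul, hρ1, one_mul]
    have t5 : ∑ x, ∑ y, δ * (ρ x * ρY y) = δ := by
      simp only [← Finset.mul_sum, hYsum, mul_one, hρ1]
    rw [t1, t2, t3, t5] at hsum
    have u1 : ρ 0 * β ≤ 1 / (4 * α) * β := mul_le_mul_of_nonneg_right h0 hβpos.le
    have u2 : β ^ 2 ≤ 1 / (4 * α) * β := by
      rw [sq]; exact mul_le_mul_of_nonneg_right hY0 hβpos.le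
    have v1 : 1 / (4 * α) * β = β / α / 4 := by field_simp
    have v2 : δ = β / α / 8 := by rw [hδ]; field_simp
    have v3 : β ^ 2 * (1 / (4 * α * β)) = β / α / 4 := by field_simp
    have : β ^ 2 * (1 / (4 * α * β)) ≤ β ^ 2 * ∑ x, ρ x * ∑ y, W y * W (x * y) := by linarith
    exact le_of_mul_le_mul_left this (by positivity)
  have hSne : ∀ y ∈ S, y ≠ 0 := fun y hy => ((hSmem y).1 hy).1
  have hE1 : (1 / β) ^ 3 / (16 * α ^ 2) ≤ ∑ x, (∑ y ∈ S, ∑ z ∈ S,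
      if y / z = x then W y * W z else 0) ^ 2 := by
    have hfeq : ∀ x, (∑ y ∈ S, ∑ z ∈ S, if y / z = x then W y * W z else 0) =
        ∑ y, W y * W (x * y) := by
      intro x
      rw [Finset.sum_comm]
      rw [← Finset.sum_subset (Finset.subset_univ S)
        (fun y _ hy => by rw [hW y, if_neg hy, zero_mul])]
      refine Finset.sum_congr rfl fun z hz => ?_
      have hz0 := hSne z hz
      by_cases hm : x * z ∈ S
      · rw [Finset.sum_eq_single_of_mem _ hm]
        · rw [if_pos (by field_simp)]; ring
        · intro y _ hne
          rw [if_neg]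
          intro h; exact hne (by rw [← h]; field_simp)
      · rw [hW (x * z), if_neg hm, mul_zero]
        refine Finset.sum_eq_zero fun y hy => ?_
        rw [if_neg]
        intro h
        apply hm
        have : x * z = y := by rw [← h]; field_simp
        rw [this]; exact hy
    simp only [hfeq]
    have hcs := Finset.sum_mul_sq_le_sq_mul_sq Finset.univ ρ (fun x => ∑ y, W y * W (x * y))
    rw [← hβsq] at hcs
    have h1 : (1 / (4 * α * β)) ^ 2 ≤ (∑ x, ρ x * ∑ y, W y * W (x * y)) ^ 2 :=
      pow_le_pow_left₀ (by positivity) hX 2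
    have h2 : β * ((1 / β) ^ 3 / (16 * α ^ 2)) = (1 / (4 * α * β)) ^ 2 := by field_simp; norm_num
    exact le_of_mul_le_mul_left (h2.trans_le (h1.trans hcs)) hβpos
  obtain ⟨S', hS'S, hS'W, hS'div⟩ := bsg_energy S W hW0 hW1 (fun y z => y / z)
    (fun q => q.1 / q.2.1 * (q.2.2.1 / q.2.2.2))
    (by
      intro y hy z hz z' hz' h
      have := hSne y hy; have := hSne z hz; have := hSne z' hz'
      field_simp at h
      exact h.symm)
    (by
      intro z hz y hy y' hy' h
      have := hSne z hz
      field_simp at h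
      exact h)
    (by
      intro y hy y' hy' w hw z hz z' hz'
      have := hSne y hy; have := hSne y' hy'; have := hSne w hw
      have := hSne z hz; have := hSne z' hz'
      field_simp)
    (1 / β) (16 * α ^ 2) (by positivity) (by positivity) hWM hE1
  have hS'card : 1 / (64 * α ^ 2 * β) ≤ (S'.card : ℝ) := by
    calc 1 / (64 * α ^ 2 * β) = 1 / β / (4 * (16 * α ^ 2)) := by field_simp; norm_num
      _ ≤ ∑ x ∈ S', W x := hS'W
      _ ≤ ∑ x ∈ S', 1 := Finset.sum_le_sum fun x _ => hW1 x
      _ = S'.card := by simp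
  have hm0 : 0 < (S'.card : ℝ) := lt_of_lt_of_le (by positivity) hS'card
  set m : ℝ := (S'.card : ℝ) with hm
  -- step 2
  have hE2 : m ^ 3 / (2 ^ 18 * α ^ 6) ≤ ∑ x, (∑ y ∈ S', ∑ z ∈ S',
      if y - z = x then (fun _ : ZMod p => (1 : ℝ)) y * (fun _ : ZMod p => (1 : ℝ)) z else 0) ^ 2 := by
    obtain ⟨f, hf⟩ : ∃ f : ZMod p → ℝ, ∀ x, f x = ∑ y ∈ S', ∑ z ∈ S',
      if y - z = x then (fun _ : ZMod p => (1 : ℝ)) y * (fun _ : ZMod p => (1 : ℝ)) z else 0 :=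
      ⟨_, fun _ => rfl⟩
    simp only [← hf]
    obtain ⟨h, hh⟩ : ∃ h : ZMod p → ℝ, ∀ x, h x = ∑ s ∈ S', ρ (x - s) := ⟨_, fun _ => rfl⟩
    have s1 : m * δ ≤ ∑ x, ρ x * h x := by
      have : ∑ x, ρ x * h x = ∑ s ∈ S', ρY s := by
        simp only [hh, Finset.mul_sum]
        rw [Finset.sum_comm]
        simp only [hρY]
      rw [this]
      calc m * δ = ∑ s ∈ S', δ := by simp [hm]
        _ ≤ _ := Finset.sum_le_sum fun s hs => ((hSmem s).1 (hS'S hs)).2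
    have s2 := Finset.sum_mul_sq_le_sq_mul_sq Finset.univ ρ h
    rw [← hβsq] at s2
    have s3 : ∑ x, h x ^ 2 = ∑ x, ρY x * f x := by
      have l : ∑ x, h x ^ 2 = ∑ y ∈ S', ∑ z ∈ S', ρY (y - z) := by
        simp only [hh, sq, Finset.sum_mul_sum]
        rw [Finset.sum_comm]
        refine Finset.sum_congr rfl fun y _ => ?_
        rw [Finset.sum_comm]
        refine Finset.sum_congr rfl fun z _ => ?_
        rw [hρY, ← hshift (fun x => ρ x * ρ (x - (y - z))) z]
        refine Finset.sum_congr rfl fun x _ => ?_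
        rw [show x - z - (y - z) = x - y by ring, mul_comm]
      rw [l]; symm
      simp only [hf, Finset.mul_sum]
      rw [Finset.sum_comm]
      refine Finset.sum_congr rfl fun y _ => ?_
      rw [Finset.sum_comm]
      refine Finset.sum_congr rfl fun z _ => ?_
      simp
    have s4 := Finset.sum_mul_sq_le_sq_mul_sq Finset.univ ρY f
    have s5 : ∑ x, ρY x ^ 2 ≤ β := by
      calc ∑ x, ρY x ^ 2 ≤ ∑ x, β * ρY x := Finset.sum_le_sum fun x _ => by
            rw [sq]; exact mul_le_mul_of_nonneg_right (hYle x) (hY0' x)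
        _ = β := by rw [← Finset.mul_sum, hYsum, mul_one]
    have hE0 : 0 ≤ ∑ x, f x ^ 2 := Finset.sum_nonneg fun x _ => sq_nonneg _
    have s6 : (m * δ) ^ 2 ≤ β * ∑ x, ρY x * f x := by
      rw [← s3]
      exact (pow_le_pow_left₀ (by positivity) s1 2).trans s2
    have s7 : ((m * δ) ^ 2) ^ 2 ≤ β ^ 2 * (β * ∑ x, f x ^ 2) := by
      refine (pow_le_pow_left₀ (by positivity) s6 2).trans ?_
      rw [mul_pow]
      exact mul_le_mul_of_nonneg_left (s4.trans (mul_le_mul_of_nonneg_right s5 hE0)) (sq_nonneg _)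
    have s8 : β ^ 3 * (m ^ 3 / (2 ^ 18 * α ^ 6)) ≤ ((m * δ) ^ 2) ^ 2 := by
      have e1 : β ^ 3 * (m ^ 3 / (2 ^ 18 * α ^ 6)) =
          m ^ 3 * (β ^ 4 / (2 ^ 12 * α ^ 4)) * (1 / (64 * α ^ 2 * β)) := by field_simp; norm_num
      have e2 : ((m * δ) ^ 2) ^ 2 = m ^ 3 * (β ^ 4 / (2 ^ 12 * α ^ 4)) * m := by
        rw [hδ]; field_simp; norm_num
      rw [e1, e2]
      exact mul_le_mul_of_nonneg_left hS'card (by positivity)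
    have s9 : β ^ 3 * (m ^ 3 / (2 ^ 18 * α ^ 6)) ≤ β ^ 3 * ∑ x, f x ^ 2 := by
      refine s8.trans (s7.trans (le_of_eq (by ring)))
    exact le_of_mul_le_mul_left s9 (by positivity)
  obtain ⟨A, hAS', hAc, hAsub⟩ := bsg_energy S' (fun _ => (1 : ℝ)) (fun _ => by norm_num)
    (fun _ => le_rfl) (fun y z => y - z) (fun q => q.1 - q.2.1 + (q.2.2.1 - q.2.2.2))
    (by
      intro y _ z _ z' _ h
      exact sub_right_injective h)
    (by
      intro y _ z _ z' _ h
      exact sub_left_injective h)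
    (by
      intro y hy y' hy' w hw z hz z' hz'
      simp only; ring)
    m (2 ^ 18 * α ^ 6) hm0 (by positivity) (by simp [hm]) hE2
  have hAS : A ⊆ S := hAS'.trans hS'S
  have hA0 : (0 : ZMod p) ∉ A := fun h => hSne 0 (hAS h) rfl
  have hS'0 : (0 : ZMod p) ∉ S' := fun h => hSne 0 (hS'S h) rfl
  obtain ⟨a, ha⟩ : ∃ a : ℝ, a = (A.card : ℝ) := ⟨_, rfl⟩
  have hAm : m / (2 ^ 20 * α ^ 6) ≤ a := by
    refine le_trans (le_of_eq ?_) (hAc.trans (le_of_eq (by simp [ha])))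
    field_simp; norm_num
  have hma : m ≤ 2 ^ 20 * α ^ 6 * a := by
    rw [div_le_iff₀ (by positivity)] at hAm; linarith
  have ha0 : 0 < a := lt_of_lt_of_le (by positivity) hAm
  have hpow : ∀ {i j : ℕ}, i ≤ j → α ^ i ≤ α ^ j := fun h => pow_le_pow_right₀ hα h
  have hβm : 1 / β ≤ 64 * α ^ 2 * m := by
    rw [div_le_iff₀ (by positivity)] at hS'card ⊢; linarith
  have hβa : 1 / β ≤ 2 ^ 26 * α ^ 8 * a := by
    calc 1 / β ≤ 64 * α ^ 2 * m := hβm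
      _ ≤ 64 * α ^ 2 * (2 ^ 20 * α ^ 6 * a) := by gcongr
      _ = _ := by ring
  refine ⟨A, hA0, ?_, ?_, ?_⟩
  · rw [← ha, div_le_iff₀ (by positivity)]
    rw [div_le_iff₀ (by positivity)] at hβa
    have : 2 ^ 26 * α ^ 8 ≤ 2 ^ 31 * α ^ 10 :=
      mul_le_mul (by norm_num) (hpow (by norm_num)) (by positivity) (by positivity)
    have := mul_le_mul_of_nonneg_right this (mul_pos ha0 hβpos).le
    linarith
  · refine le_trans ?_ hScard
    exact_mod_cast Finset.card_le_card hAS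
  · have hfin : ∀ (i j : ℕ), i ≤ 878 → j ≤ 294 → 2 ^ i * α ^ j * a ≤ 2 ^ 878 * α ^ 294 * a := by
      intro i j hi hj
      refine mul_le_mul_of_nonneg_right ?_ ha0.le
      exact mul_le_mul (pow_le_pow_right₀ (by norm_num) hi) (hpow hj) (by positivity)
        (by positivity)
    rw [← ha]
    refine max_le ?_ ?_
    · have r := Finset.ruzsa_triangle_inequality_add_sub_sub A A A
      have r' : ((A + A).card : ℝ) * a ≤ ((A - A).card : ℝ) * ((A - A).card : ℝ) := by
        rw [ha]; exact_mod_cast r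
      have q : ((A - A).card : ℝ) ≤ 2 ^ 205 * α ^ 60 * a := by
        calc ((A - A).card : ℝ) ≤ 2 ^ 23 * (2 ^ 18 * α ^ 6) ^ 9 * m := hAsub
          _ ≤ 2 ^ 23 * (2 ^ 18 * α ^ 6) ^ 9 * (2 ^ 20 * α ^ 6 * a) := by gcongr
          _ = 2 ^ 205 * α ^ 60 * a := by ring
      have q2 : ((A + A).card : ℝ) * a ≤ (2 ^ 410 * α ^ 120 * a) * a := by
        calc _ ≤ _ := r'
          _ ≤ (2 ^ 205 * α ^ 60 * a) * (2 ^ 205 * α ^ 60 * a) := by gcongr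
          _ = _ := by ring
      exact (le_of_mul_le_mul_right q2 ha0).trans (hfin _ _ (by norm_num) (by norm_num))
    · have r := mul_ruzsa S' hS'0
      have r' : ((S' * S').card : ℝ) * m ≤ ((S' / S').card : ℝ) * ((S' / S').card : ℝ) := by
        rw [hm]; exact_mod_cast r
      have q : ((S' / S').card : ℝ) ≤ 2 ^ 65 * α ^ 20 * m := by
        calc ((S' / S').card : ℝ) ≤ 2 ^ 23 * (16 * α ^ 2) ^ 9 * (1 / β) := hS'div
          _ ≤ 2 ^ 23 * (16 * α ^ 2) ^ 9 * (64 * α ^ 2 * m) := by gcongr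
          _ = _ := by ring
      have q2 : ((S' * S').card : ℝ) * m ≤ (2 ^ 130 * α ^ 40 * m) * m := by
        calc _ ≤ _ := r'
          _ ≤ (2 ^ 65 * α ^ 20 * m) * (2 ^ 65 * α ^ 20 * m) := by gcongr
          _ = _ := by ring
      have q3 := le_of_mul_le_mul_right q2 hm0
      have q4 : ((A * A).card : ℝ) ≤ ((S' * S').card : ℝ) := by
        exact_mod_cast Finset.card_le_card (Finset.mul_subset_mul hAS' hAS')
      calc ((A * A).card : ℝ) ≤ 2 ^ 130 * α ^ 40 * m := q4.trans q3
        _ ≤ 2 ^ 130 * α ^ 40 * (2 ^ 20 * α ^ 6 * a) := by gcongr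
        _ = 2 ^ 150 * α ^ 46 * a := by ring
        _ ≤ _ := hfin _ _ (by norm_num) (by norm_num)
end
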